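/- Let γ > 0 and let u_γ and ũ_γ be solutions of the stabilized-regularized linear system ((I + γAᵀA)AᵀA + γLᵀL) u = (I + γAᵀA)Aᵀc + γLᵀg corresponding to the right-hand data c = b and c = b̃ respectively. Then ‖A(u_γ − ũ_γ)‖ ≤ ‖(I + γAAᵀ)(b − b̃)‖. -/

import Mathlib

open scoped Matrix RealInnerProductSpace

/-- Multiplication of a Euclidean vector by a real matrix, landing in Euclidean space
(so that `‖·‖` and `⟪·,·⟫` denote the Euclidean norm and inner product). -/
noncomputable def mulE {m n : ℕ} (A : Matrix (Fin m) (Fin n) ℝ)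
    (v : EuclideanSpace ℝ (Fin n)) : EuclideanSpace ℝ (Fin m) :=
  Matrix.toEuclideanLin A v

theorem mulE_mul {m n k : ℕ} (A : Matrix (Fin m) (Fin n) ℝ) (B : Matrix (Fin n) (Fin k) ℝ)
    (v : EuclideanSpace ℝ (Fin k)) : mulE (A * B) v = mulE A (mulE B v) := by
  simp [mulE, Matrix.toLpLin_apply, Matrix.mulVec_mulVec]

theorem mulE_add {m n : ℕ} (A B : Matrix (Fin m) (Fin n) ℝ)
    (v : EuclideanSpace ℝ (Fin n)) : mulE (A + B) v = mulE A v + mulE B v := by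
  simp [mulE]

theorem mulE_smul {m n : ℕ} (c : ℝ) (A : Matrix (Fin m) (Fin n) ℝ)
    (v : EuclideanSpace ℝ (Fin n)) : mulE (c • A) v = c • mulE A v := by
  simp [mulE]

theorem mulE_one {n : ℕ}
    (v : EuclideanSpace ℝ (Fin n)) : mulE 1 v = v := by
  simp [mulE, Matrix.toLpLin_apply]

theorem mulE_sub {m n : ℕ} (A : Matrix (Fin m) (Fin n) ℝ)
    (v w : EuclideanSpace ℝ (Fin n)) : mulE A (v - w) = mulE A v - mulE A w := by
  simp [mulE]

theorem mulE_inner {m n : ℕ} (A : Matrix (Fin m) (Fin n) ℝ)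
    (x : EuclideanSpace ℝ (Fin m)) (y : EuclideanSpace ℝ (Fin n)) :
    ⟪mulE Aᵀ x, y⟫ = ⟪x, mulE A y⟫ := by
  have h := Matrix.toEuclideanLin_conjTranspose_eq_adjoint A
  rw [Matrix.conjTranspose_eq_transpose_of_trivial] at h
  rw [mulE, h, LinearMap.adjoint_inner_left, mulE]

/-- If `γ > 0` and `u`, `u'` solve the stabilized-regularized linear system
`((I + γAᵀA)AᵀA + γLᵀL) u = (I + γAᵀA)Aᵀc + γLᵀg` with right-hand data `c = b` and
`c = b'` respectively, then `‖A(u − u')‖ ≤ ‖(I + γAAᵀ)(b − b')‖`. -/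
theorem stmt10 {m n p : ℕ} (A : Matrix (Fin m) (Fin n) ℝ)
    (b b' : EuclideanSpace ℝ (Fin m))
    (L : Matrix (Fin p) (Fin n) ℝ) (g : EuclideanSpace ℝ (Fin p))
    (γ : ℝ) (hγ : 0 < γ) (u u' : EuclideanSpace ℝ (Fin n))
    (hu : mulE ((1 + γ • (Aᵀ * A)) * (Aᵀ * A) + γ • (Lᵀ * L)) u
        = mulE (1 + γ • (Aᵀ * A)) (mulE Aᵀ b) + γ • mulE Lᵀ g)
    (hu' : mulE ((1 + γ • (Aᵀ * A)) * (Aᵀ * A) + γ • (Lᵀ * L)) u'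
        = mulE (1 + γ • (Aᵀ * A)) (mulE Aᵀ b') + γ • mulE Lᵀ g) :
    ‖mulE A (u - u')‖ ≤ ‖mulE (1 + γ • (A * Aᵀ)) (b - b')‖ := by
  have h : mulE ((1 + γ • (Aᵀ * A)) * (Aᵀ * A) + γ • (Lᵀ * L)) (u - u')
      = mulE (1 + γ • (Aᵀ * A)) (mulE Aᵀ (b - b')) := by
    rw [mulE_sub, hu, hu', mulE_sub, mulE_sub]
    abel
  generalize u - u' = w at h ⊢
  generalize b - b' = d at h ⊢
  have h2 := congrArg (fun z => ⟪z, w⟫) h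
  have h3 : ⟪mulE Aᵀ (mulE A (mulE Aᵀ (mulE A w))), w⟫ = ‖mulE Aᵀ (mulE A w)‖ ^ 2 := by
    rw [mulE_inner, real_inner_comm, ← mulE_inner, real_inner_self_eq_norm_sq]
  simp only [mulE_mul, mulE_add, mulE_smul, mulE_one, inner_add_left, real_inner_smul_left,
    h3] at h2
  simp only [mulE_inner, real_inner_self_eq_norm_sq] at h2
  have h4 := real_inner_le_norm (mulE (1 + γ • (A * Aᵀ)) d) (mulE A w)
  have h5 : ⟪mulE (1 + γ • (A * Aᵀ)) d, mulE A w⟫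
      = ⟪d, mulE A w⟫ + γ * ⟪mulE A (mulE Aᵀ d), mulE A w⟫ := by
    simp only [mulE_mul, mulE_add, mulE_smul, mulE_one, inner_add_left, real_inner_smul_left]
  have h6 : 0 ≤ γ * ‖mulE Aᵀ (mulE A w)‖ ^ 2 := by positivity
  have h7 : 0 ≤ γ * ‖mulE L w‖ ^ 2 := by positivity
  rcases (norm_nonneg (mulE A w)).eq_or_lt with h0 | h0
  · rw [← h0]; exact norm_nonneg _
  · refine le_of_mul_le_mul_right ?_ h0
    nlinarith
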